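/- arXiv:2603.10645 — 2 statements merged into one kernel-verified Lean document; each statement's English description precedes it below -/
import Mathlib

section
/- Let n ≥ 2 and let a₁, …, aₙ be real numbers with a₁ + ⋯ + aₙ = 0. Then Σᵢ aᵢ³ ≥ −((n−2)/√(n(n−1))) · (Σᵢ aᵢ²)^{3/2}. -/
/-!
Put `S = ∑ aᵢ²` and `t = √S / √(n(n-1))`, so `n(n-1) t² = S`. Cauchy–Schwarz together with
`∑ aᵢ = 0` gives `aᵢ ≥ -(n-1) t` for every `i`, hence `(aᵢ + (n-1) t) (aᵢ - t)² ≥ 0`. This cubic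
vanishes at the values taken in the equality case, where one `aᵢ` is `-(n-1) t` and all the others
are `t`. Summing over `i`, the linear terms drop out and what remains is
`∑ aᵢ³ + (n-3) t S + n(n-1) t³ = ∑ aᵢ³ + (n-2) t S ≥ 0`, with `t S = S^{3/2} / √(n(n-1))`.
-/

/-- If reals sum to zero, the square of each is at most `(n-1)/n` times the sum of squares. -/
lemma card_mul_sq_le_of_sum_eq_zero (n : ℕ) (hn : 2 ≤ n) (a : Fin n → ℝ)
    (hsum : ∑ i, a i = 0) (i : Fin n) :
    (n : ℝ) * a i ^ 2 ≤ ((n : ℝ) - 1) * ∑ j, a j ^ 2 := by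
  have hn' : (2 : ℝ) ≤ n := by exact_mod_cast hn
  -- The summand at `j = i` is `(n aᵢ)²`; the others vanish when all `aⱼ` with `j ≠ i` are equal.
  have h : (((n : ℝ) - 1) * a i + a i) ^ 2 ≤ ∑ j, (((n : ℝ) - 1) * a j + a i) ^ 2 :=
    Finset.single_le_sum (f := fun j => (((n : ℝ) - 1) * a j + a i) ^ 2)
      (fun j _ => sq_nonneg _) (Finset.mem_univ i)
  have e : ∑ j, (((n : ℝ) - 1) * a j + a i) ^ 2
      = ((n : ℝ) - 1) ^ 2 * ∑ j, a j ^ 2 + 2 * ((n : ℝ) - 1) * a i * ∑ j, a j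
        + n * a i ^ 2 := by
    have hc : (n : ℝ) * a i ^ 2 = ∑ _j : Fin n, a i ^ 2 := by simp
    rw [hc, Finset.mul_sum, Finset.mul_sum, ← Finset.sum_add_distrib, ← Finset.sum_add_distrib]
    exact Finset.sum_congr rfl fun j _ => by ring
  rw [e, hsum] at h
  have hpos : (0 : ℝ) < n - 1 := by linarith
  refine le_of_mul_le_mul_left ?_ hpos
  linarith

theorem neg_le_sum_cube_of_sum_eq_zero (n : ℕ) (hn : 2 ≤ n) (a : Fin n → ℝ)
    (hsum : ∑ i, a i = 0) :
    -(((n : ℝ) - 2) / Real.sqrt ((n : ℝ) * ((n : ℝ) - 1)) *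
        (∑ i, (a i) ^ 2) ^ ((3 : ℝ) / 2)) ≤ ∑ i, (a i) ^ 3 := by
  have hn' : (2 : ℝ) ≤ n := by exact_mod_cast hn
  have key := card_mul_sq_le_of_sum_eq_zero n hn a hsum
  have hS : 0 ≤ ∑ i, a i ^ 2 := Finset.sum_nonneg fun i _ => sq_nonneg _
  obtain ⟨S, hSdef⟩ : ∃ S, S = ∑ i, a i ^ 2 := ⟨_, rfl⟩
  rw [← hSdef] at hS ⊢
  simp only [← hSdef] at key
  have hpos : 0 < (n : ℝ) * ((n : ℝ) - 1) := mul_pos (by linarith) (by linarith)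
  have hpow : S ^ ((3 : ℝ) / 2) = S * √S := by
    rw [show (3 : ℝ) / 2 = 1 + 1 / 2 by norm_num,
      Real.rpow_add_of_nonneg hS (by norm_num) (by norm_num), Real.rpow_one, Real.sqrt_eq_rpow]
  obtain ⟨t, ht⟩ : ∃ t, t = √S / √((n : ℝ) * ((n : ℝ) - 1)) := ⟨_, rfl⟩
  have ht0 : 0 ≤ t := by rw [ht]; positivity
  have ht2 : (n : ℝ) * ((n : ℝ) - 1) * t ^ 2 = S := by
    rw [ht, div_pow, Real.sq_sqrt hS, Real.sq_sqrt hpos.le, mul_div_cancel₀ _ hpos.ne']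
  have hlow : ∀ i, 0 ≤ a i + ((n : ℝ) - 1) * t := fun i => by
    have h : a i ^ 2 ≤ (((n : ℝ) - 1) * t) ^ 2 := by
      refine le_of_mul_le_mul_left ((key i).trans_eq ?_) (by linarith : (0 : ℝ) < n)
      rw [← ht2]; ring
    linarith [(abs_le_of_sq_le_sq' h (mul_nonneg (by linarith) ht0)).1]
  have hcubic : 0 ≤ ∑ i, (a i + ((n : ℝ) - 1) * t) * (a i - t) ^ 2 :=
    Finset.sum_nonneg fun i _ => mul_nonneg (hlow i) (sq_nonneg _)
  have e : ∑ i, (a i + ((n : ℝ) - 1) * t) * (a i - t) ^ 2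
      = ∑ i, a i ^ 3 + ((n : ℝ) - 3) * t * ∑ i, a i ^ 2
        + (t ^ 2 - 2 * ((n : ℝ) - 1) * t ^ 2) * ∑ i, a i
        + n * (((n : ℝ) - 1) * t ^ 3) := by
    have hc : (n : ℝ) * (((n : ℝ) - 1) * t ^ 3) = ∑ _i : Fin n, ((n : ℝ) - 1) * t ^ 3 := by simp
    rw [hc, Finset.mul_sum, Finset.mul_sum, ← Finset.sum_add_distrib, ← Finset.sum_add_distrib,
      ← Finset.sum_add_distrib]
    exact Finset.sum_congr rfl fun i _ => by ring
  rw [e, hsum, ← hSdef] at hcubic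
  have hconst : (n : ℝ) * (((n : ℝ) - 1) * t ^ 3) = S * t := by rw [← ht2]; ring
  have hrhs : ((n : ℝ) - 2) / √((n : ℝ) * ((n : ℝ) - 1)) * S ^ ((3 : ℝ) / 2)
      = ((n : ℝ) - 2) * t * S := by
    rw [hpow, ht]; ring
  rw [hrhs]
  linarith
end

section
/- Let r ≥ 0 be a real number and let A be a real symmetric 3×3 matrix with trace(A) = 0 and trace(A²) ≤ r²/24. Then trace(A³) ≥ −(r/12) · trace(A²). -/
/-! A real symmetric matrix is orthogonally diagonalizable, so `s = trace (A²)` and `t = trace (A³)`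
are the power sums of its eigenvalues (`trace_pow_eq_sum_eigenvalues_pow`). These are three reals
with sum zero, and nonnegativity of the discriminant of the characteristic polynomial reads
`6 t² ≤ s³` (`six_mul_sum_cube_sq_le`). With `s ≤ r² / 24` this gives `t² ≤ (r s / 12)²`. -/

/-- The power sums of the eigenvalues of a real symmetric matrix are the traces of its powers. -/
theorem trace_pow_eq_sum_eigenvalues_pow {n : Type*} [Fintype n] [DecidableEq n]
    {A : Matrix n n ℝ} (hA : A.IsHermitian) (k : ℕ) :
    (A ^ k).trace = ∑ i, hA.eigenvalues i ^ k := by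
  conv_lhs => rw [hA.spectral_theorem, ← map_pow, Unitary.conjStarAlgAut_apply,
    Matrix.trace_mul_cycle, Unitary.coe_star_mul_self, one_mul, Matrix.diagonal_pow,
    Matrix.trace_diagonal]
  simp

/-- For `a + b + c = 0`, the difference `(∑ a²)³ - 6 (∑ a³)²` is twice the discriminant
`(a - b)² (b - c)² (c - a)²`. -/
theorem six_mul_sum_cube_sq_le {a b c : ℝ} (h : a + b + c = 0) :
    6 * (a ^ 3 + b ^ 3 + c ^ 3) ^ 2 ≤ (a ^ 2 + b ^ 2 + c ^ 2) ^ 3 := by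
  obtain rfl : c = -a - b := by linarith
  have := sq_nonneg ((a - b) * (b - (-a - b)) * ((-a - b) - a))
  linarith

theorem trace_cube_ge_of_small (r : ℝ) (hr : 0 ≤ r) (A : Matrix (Fin 3) (Fin 3) ℝ)
    (hA : A.IsSymm) (htr : A.trace = 0) (hle : (A ^ 2).trace ≤ r ^ 2 / 24) :
    (A ^ 3).trace ≥ -(r / 12) * (A ^ 2).trace := by
  have hH : A.IsHermitian := by
    rwa [Matrix.IsHermitian, Matrix.conjTranspose_eq_transpose_of_trivial]
  have h1 : ∑ i, hH.eigenvalues i ^ 1 = 0 := by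
    rw [← trace_pow_eq_sum_eigenvalues_pow, pow_one, htr]
  rw [trace_pow_eq_sum_eigenvalues_pow hH] at hle ⊢
  rw [trace_pow_eq_sum_eigenvalues_pow hH]
  simp only [Fin.sum_univ_three, pow_one] at h1 hle ⊢
  have h6 := six_mul_sum_cube_sq_le h1
  have hs : 0 ≤ hH.eigenvalues 0 ^ 2 + hH.eigenvalues 1 ^ 2 + hH.eigenvalues 2 ^ 2 := by
    positivity
  generalize hH.eigenvalues 0 ^ 2 + hH.eigenvalues 1 ^ 2 + hH.eigenvalues 2 ^ 2 = s at *
  generalize hH.eigenvalues 0 ^ 3 + hH.eigenvalues 1 ^ 3 + hH.eigenvalues 2 ^ 3 = t at *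
  have hsq : t ^ 2 ≤ (r / 12 * s) ^ 2 := by
    have := mul_le_mul_of_nonneg_left hle (sq_nonneg s)
    linarith
  have := (abs_le_of_sq_le_sq' hsq (by positivity)).1
  linarith
end
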